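/- arXiv:math-ph/0606045 — 12 statements merged into one kernel-verified Lean document; each statement's English description precedes it below -/
import Mathlib

section
/- Let F be a field, let n ≥ 2 and let k be an integer with 1 ≤ k and 2k ≤ n. Let B be an n×n upper unitriangular matrix over F (B_{ii} = 1 for all i, B_{ij} = 0 for i > j) and let X be an n×n strictly lower triangular matrix over F (X_{ij} = 0 for i ≤ j). Then det of the k×k matrix whose (p,q) entry is (B X B⁻¹)_{n−k+p, q} equals det of the k×k matrix whose (p,q) entry is X_{n−k+p, q}. In other words, the function X ↦ det X^{n−k+1,n}_{1,k} is invariant under conjugation X ↦ B X B⁻¹ by upper unitriangular matrices. -/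
/-!
Put `Y = B X B⁻¹`, so that `Y B = B X`. Compare the lower-left `k × k` corners of both sides.
The first `k` columns of `B` vanish below row `k`, and its last `k` rows vanish left of the last
`k` columns, so the corners satisfy `Y' P = Q X'`, where `P` and `Q` are the upper-left and
lower-right `k × k` blocks of `B`. Both blocks are upper unitriangular, hence of determinant `1`
(`det_submatrix_unitriangular`), and so `det Y' = det X'`.
-/

theorem det_submatrix_unitriangular {F : Type*} [Field F] {n k : ℕ}
    (B : Matrix (Fin n) (Fin n) F) (hBdiag : ∀ i : Fin n, B i i = 1)
    (hBlow : ∀ i j : Fin n, j < i → B i j = 0) (e : Fin k → Fin n) (he : StrictMono e) :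
    (B.submatrix e e).det = 1 := by
  rw [Matrix.det_of_isUpperTriangular]
  · simp [hBdiag]
  · intro i j hij
    exact hBlow _ _ (he hij)

/-- The determinant of the lower-left `k × k` corner block of a strictly
lower triangular matrix `X` is invariant under conjugation `X ↦ B X B⁻¹` by an upper
unitriangular matrix `B`. -/
theorem det_corner_block_invariant {F : Type*} [Field F] (n k : ℕ) (hn : 2 ≤ n)
    (hk1 : 1 ≤ k) (hkn : 2 * k ≤ n)
    (B X : Matrix (Fin n) (Fin n) F)
    (hBdiag : ∀ i : Fin n, B i i = 1)
    (hBlow : ∀ i j : Fin n, j < i → B i j = 0)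
    (hX : ∀ i j : Fin n, i ≤ j → X i j = 0) :
    Matrix.det (Matrix.of fun p q : Fin k =>
        (B * X * B⁻¹) ⟨n - k + p.val, by have := p.isLt; omega⟩
          ⟨q.val, by have := q.isLt; omega⟩) =
      Matrix.det (Matrix.of fun p q : Fin k =>
        X ⟨n - k + p.val, by have := p.isLt; omega⟩ ⟨q.val, by have := q.isLt; omega⟩) := by
  have hdet : B.det = 1 := by
    simpa using det_submatrix_unitriangular B hBdiag hBlow id strictMono_id
  -- `lo` and `hi` embed `Fin k` as the first and the last `k` indices.
  let lo : Fin k → Fin n := fun q => ⟨q.val, by have := q.isLt; omega⟩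
  let hi : Fin k → Fin n := fun p => ⟨n - k + p.val, by have := p.isLt; omega⟩
  have hlo : StrictMono lo := fun a b h => h
  have hhi : StrictMono hi := fun a b h => Nat.add_lt_add_left h _
  change ((B * X * B⁻¹).submatrix hi lo).det = (X.submatrix hi lo).det
  have hYB : B * X * B⁻¹ * B = B * X :=
    Matrix.nonsing_inv_mul_cancel_right B _ (by simp [hdet])
  generalize B * X * B⁻¹ = Y at hYB ⊢
  have hblock : Y.submatrix hi lo * B.submatrix lo lo = B.submatrix hi hi * X.submatrix hi lo := by
    ext p q
    have hpq : (Y * B) (hi p) (lo q) = (B * X) (hi p) (lo q) := by rw [hYB]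
    rw [Matrix.mul_apply, Matrix.mul_apply] at hpq
    rw [Matrix.mul_apply, Matrix.mul_apply]
    refine ((Fintype.sum_of_injective lo hlo.injective _ _ ?_ fun _ => rfl).trans hpq).trans
      (Fintype.sum_of_injective hi hhi.injective _ _ ?_ fun _ => rfl).symm
    · intro j hj
      have hkj : k ≤ j.val := by
        by_contra h
        exact hj ⟨⟨j.val, by omega⟩, rfl⟩
      rw [hBlow j (lo q) (Fin.lt_def.mpr (q.isLt.trans_le hkj)), mul_zero]
    · intro j hj
      have hjk : j.val < n - k := by
        by_contra h
        have := j.isLt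
        exact hj ⟨⟨j.val - (n - k), by omega⟩, Fin.ext (by simp only [hi]; omega)⟩
      rw [hBlow (hi p) j (Fin.lt_def.mpr (hjk.trans_le (Nat.le_add_right _ _))), zero_mul]
  have h := congrArg Matrix.det hblock
  rwa [Matrix.det_mul, Matrix.det_mul, det_submatrix_unitriangular B hBdiag hBlow lo hlo,
    det_submatrix_unitriangular B hBdiag hBlow hi hhi, mul_one, one_mul] at h
end

section
/- Let F be the field of real or complex numbers and n ≥ 2. There exists a strictly lower triangular n×n matrix X₀ over F such that the linear map, from the F-vector space of strictly upper triangular n×n matrices over F to its dual, sending A to the linear functional B ↦ trace(X₀ · (A B − B A)), has rank at least n(n−1)/2 − ⌊n/2⌋. (Equivalently, the skew-symmetric bilinear form ω(A,B) = trace(X₀ · [A,B]) on the space of strictly upper triangular matrices has rank at least n(n−1)/2 − ⌊n/2⌋, so the Lie algebra of strictly upper triangular n×n matrices has at most ⌊n/2⌋ functionally independent invariants of its coadjoint representation.) -/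
/-!
Take for `X₀` the lower half of the antidiagonal permutation matrix. With `σ i = n - 1 - i`, the form
pairs the matrix unit `E_{ab}`, where `a < b` and `a + b < n - 1`, with `E_{b, σ a}` and with no
other matrix unit, so the matrix units off the antidiagonal are perfectly matched and span a subspace on
which the form is nondegenerate. Concretely, evaluating at these partners shows that a matrix in
the kernel of the form vanishes off the antidiagonal (`apply_eq_zero_of_coadjointForm_eq_zero`).
Hence the form is injective on the matrices supported on `offAntidiagPairs n`, and it remains to
count these positions: `n(n-1)/2` positions above the diagonal, at most `⌊n/2⌋` of which lie on the
antidiagonal.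
-/

/-- The space `t₀(n)` of strictly upper triangular `n × n` matrices over `F`,
as a submodule of the matrix space. -/
def strictlyUpperTriangular (F : Type*) [Field F] (n : ℕ) :
    Submodule F (Matrix (Fin n) (Fin n) F) where
  carrier := {A | ∀ i j : Fin n, j ≤ i → A i j = 0}
  add_mem' := by
    intro A B hA hB i j h
    simp [Matrix.add_apply, hA i j h, hB i j h]
  zero_mem' := by
    intro i j _
    simp
  smul_mem' := by
    intro c A hA i j h
    simp [Matrix.smul_apply, hA i j h]

/-- The linear map from `t₀(n)` to its dual associated with a matrix `X₀`, sending `A` to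
the functional `B ↦ trace (X₀ * (A * B - B * A))`. -/
noncomputable def coadjointForm {F : Type*} [Field F] {n : ℕ}
    (X₀ : Matrix (Fin n) (Fin n) F) :
    strictlyUpperTriangular F n →ₗ[F] Module.Dual F (strictlyUpperTriangular F n) :=
  LinearMap.mk₂ F
    (fun A B => Matrix.trace (X₀ *
      ((A : Matrix (Fin n) (Fin n) F) * (B : Matrix (Fin n) (Fin n) F)
        - (B : Matrix (Fin n) (Fin n) F) * (A : Matrix (Fin n) (Fin n) F))))
    (by
      intro A A' B
      simp only [Submodule.coe_add, Matrix.add_mul, Matrix.mul_add, Matrix.mul_sub,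
        Matrix.trace_add, Matrix.trace_sub]
      abel)
    (by
      intro c A B
      simp only [Submodule.coe_smul, Matrix.smul_mul, Matrix.mul_smul, ← smul_sub,
        Matrix.trace_smul, smul_eq_mul])
    (by
      intro A B B'
      simp only [Submodule.coe_add, Matrix.add_mul, Matrix.mul_add, Matrix.mul_sub,
        Matrix.trace_add, Matrix.trace_sub]
      abel)
    (by
      intro c A B
      simp only [Submodule.coe_smul, Matrix.smul_mul, Matrix.mul_smul, ← smul_sub,
        Matrix.trace_smul, smul_eq_mul])

/-- The part of the antidiagonal permutation matrix strictly below the diagonal. -/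
def lowerAntidiag (F : Type*) [Field F] (n : ℕ) : Matrix (Fin n) (Fin n) F :=
  fun i j => if j = i.rev ∧ j < i then 1 else 0

lemma lowerAntidiag_mul_apply {F : Type*} [Field F] {n : ℕ} (A : Matrix (Fin n) (Fin n) F)
    (i j : Fin n) :
    (lowerAntidiag F n * A) i j = if i.rev < i then A i.rev j else 0 := by
  rw [Matrix.mul_apply, Finset.sum_eq_single i.rev]
  · simp [lowerAntidiag]
  · intro k _ hk
    simp [lowerAntidiag, hk]
  · simp

lemma mul_lowerAntidiag_apply {F : Type*} [Field F] {n : ℕ} (A : Matrix (Fin n) (Fin n) F)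
    (i j : Fin n) :
    (A * lowerAntidiag F n) i j = if j < j.rev then A i j.rev else 0 := by
  rw [Matrix.mul_apply, Finset.sum_eq_single j.rev]
  · simp [lowerAntidiag]
  · intro k _ hk
    have : j ≠ k.rev := fun h => hk (by rw [h, Fin.rev_rev])
    simp [lowerAntidiag, this]
  · simp

/-- The form pairs `A` with the matrix unit `E_{cd}` through an entry of the commutator
`[X₀, A]`. -/
lemma coadjointForm_apply_single {F : Type*} [Field F] {n : ℕ} (X₀ : Matrix (Fin n) (Fin n) F)
    (A : strictlyUpperTriangular F n) (c d : Fin n)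
    (h : Matrix.single c d (1 : F) ∈ strictlyUpperTriangular F n) :
    coadjointForm X₀ A ⟨Matrix.single c d 1, h⟩
      = (X₀ * (A : Matrix (Fin n) (Fin n) F)) d c - ((A : Matrix (Fin n) (Fin n) F) * X₀) d c := by
  change Matrix.trace (X₀ * ((A : Matrix (Fin n) (Fin n) F) * Matrix.single c d 1
    - Matrix.single c d 1 * (A : Matrix (Fin n) (Fin n) F))) = _
  rw [Matrix.mul_sub, Matrix.trace_sub, ← Matrix.mul_assoc, Matrix.trace_mul_comm X₀,
    Matrix.mul_assoc (Matrix.single c d 1), Matrix.trace_mul_comm _ (Matrix.single c d 1),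
    Matrix.trace_single_mul, Matrix.trace_single_mul]
  simp

lemma single_mem_strictlyUpperTriangular {F : Type*} [Field F] {n : ℕ} {c d : Fin n}
    (h : c < d) : Matrix.single c d (1 : F) ∈ strictlyUpperTriangular F n := by
  intro i j hij
  rw [Matrix.single_apply, if_neg]
  rintro ⟨rfl, rfl⟩
  exact absurd h (not_lt.mpr hij)

lemma apply_eq_zero_of_coadjointForm_eq_zero {F : Type*} [Field F] {n : ℕ}
    (A : strictlyUpperTriangular F n) (hA : coadjointForm (lowerAntidiag F n) A = 0)
    {a b : Fin n} (hab : a < b) (hne : a ≠ b.rev) : (A : Matrix (Fin n) (Fin n) F) a b = 0 := by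
  have hzero : (A : Matrix (Fin n) (Fin n) F) a.rev b.rev = 0 :=
    A.2 _ _ (Fin.rev_le_rev.mpr hab.le)
  have key : ∀ c d : Fin n, c < d →
      (lowerAntidiag F n * (A : Matrix (Fin n) (Fin n) F)) d c
        - ((A : Matrix (Fin n) (Fin n) F) * lowerAntidiag F n) d c = 0 := by
    intro c d hcd
    rw [← coadjointForm_apply_single _ A c d (single_mem_strictlyUpperTriangular hcd), hA]
    rfl
  rcases lt_or_gt_of_ne hne with h | h
  · -- `a + b < n - 1`: the partner of `E_{ab}` is `E_{b, σ a}`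
    have hb : b < a.rev := by rw [Fin.lt_def, Fin.val_rev] at *; omega
    have := key b a.rev hb
    rw [lowerAntidiag_mul_apply, mul_lowerAntidiag_apply, Fin.rev_rev, hzero,
      if_pos (hab.trans hb)] at this
    simpa using this
  · -- `a + b > n - 1`: the partner is `E_{σ b, a}`
    have := key b.rev a h
    rw [lowerAntidiag_mul_apply, mul_lowerAntidiag_apply, Fin.rev_rev, hzero,
      if_pos (h.trans hab)] at this
    simpa using this

/-- The positions strictly above the diagonal and off the antidiagonal. -/
def offAntidiagPairs (n : ℕ) : Finset (Fin n × Fin n) :=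
  Finset.univ.filter fun p => p.1 < p.2 ∧ p.1 ≠ p.2.rev

lemma card_pairs_lt (n : ℕ) :
    (Finset.univ.filter fun p : Fin n × Fin n => p.1 < p.2).card = n * (n - 1) / 2 := by
  rw [Finset.card_filter, Fintype.sum_prod_type_right, ← Finset.sum_range_id,
    ← Fin.sum_univ_eq_sum_range (fun i => i)]
  refine Finset.sum_congr rfl fun b _ => ?_
  rw [← Finset.card_filter, ← Fin.card_Iio]
  congr 1
  ext x
  simp

/-- A position on the antidiagonal and above the diagonal is determined by its row, which is one
of the first `⌊n/2⌋`. -/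
lemma card_antidiag_pairs_le (n : ℕ) :
    (Finset.univ.filter fun p : Fin n × Fin n => p.1 < p.2 ∧ p.1 = p.2.rev).card ≤ n / 2 := by
  rw [← Finset.card_range (n / 2)]
  refine Finset.card_le_card_of_injOn (fun p => (p.1 : ℕ)) ?_ ?_
  · rintro ⟨a, b⟩ h
    obtain ⟨h1, h2⟩ : a < b ∧ a = b.rev := by simpa using h
    have h3 := congrArg Fin.val h2
    rw [Fin.val_rev] at h3
    rw [Fin.lt_def] at h1
    simp only [Finset.coe_range, Set.mem_Iio]
    omega
  · rintro ⟨a, b⟩ h ⟨c, d⟩ h' e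
    have h2 : a = b.rev := by have := h; simp at this; exact this.2
    have h2' : c = d.rev := by have := h'; simp at this; exact this.2
    have e' : a = c := Fin.ext e
    have : b = d := Fin.rev_injective (by rw [← h2, ← h2', e'])
    rw [e', this]

lemma le_card_offAntidiagPairs (n : ℕ) :
    n * (n - 1) / 2 - n / 2 ≤ (offAntidiagPairs n).card := by
  have h := Finset.card_filter_add_card_filter_not
    (s := Finset.univ.filter fun p : Fin n × Fin n => p.1 < p.2) (fun p => p.1 = p.2.rev)
  rw [Finset.filter_filter, Finset.filter_filter, card_pairs_lt] at h
  have h' := card_antidiag_pairs_le n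
  unfold offAntidiagPairs
  simp only [ne_eq]
  omega

/-- The inclusion of the matrices supported on `offAntidiagPairs n` into `t₀(n)`. -/
def offAntidiagInclusion (F : Type*) [Field F] (n : ℕ) :
    (offAntidiagPairs n → F) →ₗ[F] strictlyUpperTriangular F n where
  toFun c := ⟨Matrix.of fun i j => if h : (i, j) ∈ offAntidiagPairs n then c ⟨(i, j), h⟩ else 0, by
    intro i j hij
    refine dif_neg fun h => ?_
    exact absurd (Finset.mem_filter.mp h).2.1 (not_lt.mpr hij)⟩
  map_add' c c' := by
    ext i j
    by_cases h : (i, j) ∈ offAntidiagPairs n <;> simp [h]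
  map_smul' r c := by
    ext i j
    by_cases h : (i, j) ∈ offAntidiagPairs n <;> simp [h]

/-- For `F = ℝ` or `ℂ` and `n ≥ 2` there is a strictly lower triangular matrix
`X₀` such that the linear map `A ↦ (B ↦ trace (X₀ (A B − B A)))` from the strictly upper
triangular matrices to their dual has rank at least `n(n−1)/2 − ⌊n/2⌋`. -/
theorem exists_functional_with_large_rank (F : Type*) [RCLike F] (n : ℕ) (hn : 2 ≤ n) :
    ∃ X₀ : Matrix (Fin n) (Fin n) F, (∀ i j : Fin n, i ≤ j → X₀ i j = 0) ∧
      n * (n - 1) / 2 - n / 2 ≤ Module.finrank F (LinearMap.range (coadjointForm X₀)) := by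
  refine ⟨lowerAntidiag F n, ?_, (le_card_offAntidiagPairs n).trans ?_⟩
  · intro i j hij
    exact if_neg fun h => absurd h.2 (not_lt.mpr hij)
  · have hinj : Function.Injective
        (coadjointForm (lowerAntidiag F n) ∘ₗ offAntidiagInclusion F n) := by
      rw [← LinearMap.ker_eq_bot, LinearMap.ker_eq_bot']
      intro c hc
      funext ⟨⟨a, b⟩, hp⟩
      have hab := (Finset.mem_filter.mp hp).2
      have h0 := apply_eq_zero_of_coadjointForm_eq_zero (offAntidiagInclusion F n c) hc
        hab.1 hab.2
      change dite _ _ _ = _ at h0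
      rwa [dif_pos hp] at h0
    calc (offAntidiagPairs n).card = Module.finrank F (offAntidiagPairs n → F) := by simp
      _ = Module.finrank F (LinearMap.range
            (coadjointForm (lowerAntidiag F n) ∘ₗ offAntidiagInclusion F n)) :=
          (LinearMap.finrank_range_of_inj hinj).symm
      _ ≤ _ := Submodule.finrank_mono (LinearMap.range_comp_le_range _ _)
end

section
/- Let F be the field of real or complex numbers and n ≥ 2. In the polynomial ring over F in the variables x_{ij} indexed by pairs with 1 ≤ j < i ≤ n, the polynomials P_k = det((x_{n−k+p, q})_{p,q = 1, …, k}) for k = 1, …, ⌊n/2⌋ are algebraically independent over F. -/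
/-!
A family of polynomials over an infinite field is algebraically independent as soon as it takes
every tuple of nonzero values: a relation `f` then vanishes on the torus, so `f * ∏ X_i` vanishes
everywhere and `f = 0` (`algebraicIndependent_of_eval_surj`).

For the corner minors, evaluate at points supported on the antidiagonal `i + j = n - 1`
(`0`-based), with value `y j` in column `j`. Each matrix becomes antidiagonal, so
`P_k` takes the value `± y 0 ⋯ y k`, the sign being that of the order-reversing
permutation (`det_antidiagonal`). Taking for `y` the successive quotients of the prescribed values,
corrected by these signs, reaches every tuple of nonzero values.
-/

open MvPolynomial in
theorem algebraicIndependent_of_eval_surj {F σ ι : Type*} [Field F] [Infinite F] [Fintype ι]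
    (P : ι → MvPolynomial σ F)
    (h : ∀ a : ι → F, (∀ i, a i ≠ 0) → ∃ x : σ → F, ∀ i, eval x (P i) = a i) :
    AlgebraicIndependent F P := by
  rw [algebraicIndependent_iff]
  intro f hf
  have hprod : f * ∏ i, (X i : MvPolynomial ι F) = 0 := by
    refine MvPolynomial.funext fun a => ?_
    rw [map_mul, map_prod, map_zero]
    by_cases ha : ∀ i, a i ≠ 0
    · obtain ⟨x, hx⟩ := h a ha
      have key : eval x (aeval P f) = eval a f := by
        have hcomp : (aeval x : MvPolynomial σ F →ₐ[F] F).comp (aeval P) = aeval a := by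
          refine MvPolynomial.algHom_ext fun i => ?_
          simpa [aeval_eq_eval] using hx i
        simpa [aeval_eq_eval] using DFunLike.congr_fun hcomp f
      rw [← key, hf, map_zero, zero_mul]
    · push Not at ha
      obtain ⟨i, hi⟩ := ha
      rw [Finset.prod_eq_zero (Finset.mem_univ i) (by simpa using hi), mul_zero]
  rcases mul_eq_zero.mp hprod with h0 | h0
  · exact h0
  · exact absurd h0 (Finset.prod_ne_zero_iff.mpr fun i _ => X_ne_zero i)

theorem det_antidiagonal {F : Type*} [Field F] (m : ℕ) (y : ℕ → F)
    (A : Matrix (Fin m) (Fin m) F)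
    (hA : ∀ p q, A p q = if p.val + q.val + 1 = m then y q.val else 0) :
    A.det = ((Equiv.Perm.sign (Fin.revPerm : Equiv.Perm (Fin m)) : ℤ) : F) *
      ∏ q ∈ Finset.range m, y q := by
  have hdiag : A = (Matrix.diagonal fun q : Fin m => y q.val).submatrix Fin.revPerm id := by
    ext p q
    rw [hA, Matrix.submatrix_apply, Matrix.diagonal_apply]
    have hiff : Fin.revPerm p = id q ↔ p.val + q.val + 1 = m := by
      rw [Fin.ext_iff, Fin.revPerm_apply, Fin.val_rev, id]
      omega
    by_cases hc : p.val + q.val + 1 = m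
    · rw [if_pos hc, if_pos (hiff.mpr hc), hiff.mpr hc, id]
    · rw [if_neg hc, if_neg (mt hiff.mp hc)]
  rw [hdiag, Matrix.det_permute, Matrix.det_diagonal, Fin.prod_univ_eq_prod_range]

theorem prod_range_quotients {F : Type*} [Field F] (b : ℕ → F) (hb : ∀ i, b i ≠ 0)
    (h0 : b 0 = 1) (m : ℕ) : ∏ q ∈ Finset.range m, b (q + 1) / b q = b m := by
  induction m with
  | zero => simp [h0]
  | succ m ih => rw [Finset.prod_range_succ, ih, mul_div_cancel₀ _ (hb m)]

open MvPolynomial in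
/-- In the polynomial ring over `F` (`= ℝ` or `ℂ`) in the variables `x_{ij}`,
`1 ≤ j < i ≤ n`, the polynomials `P_k = det ((x_{n−k+p, q})_{p,q=1,…,k})`,
`k = 1, …, ⌊n/2⌋`, are algebraically independent over `F`.
(Indices are coded `0`-based: the pair `(i, j)` with `j < i` in `Fin n × Fin n`
corresponds to the `1`-based variable `x_{i+1, j+1}`.) -/
theorem corner_minors_algebraically_independent (F : Type*) [RCLike F] (n : ℕ)
    (hn : 2 ≤ n) :
    AlgebraicIndependent F (fun k : Fin (n / 2) =>
      Matrix.det (Matrix.of (fun p q : Fin (k.val + 1) =>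
        (MvPolynomial.X
          (⟨(⟨n - (k.val + 1) + p.val, by have := k.isLt; have := p.isLt; omega⟩,
             ⟨q.val, by have := k.isLt; have := q.isLt; omega⟩),
            by
              have := k.isLt; have := p.isLt; have := q.isLt
              simp only [Fin.mk_lt_mk]
              omega⟩)
          : MvPolynomial {ij : Fin n × Fin n // ij.2 < ij.1} F)))) := by
  refine algebraicIndependent_of_eval_surj _ fun a ha => ?_
  let s : ℕ → F := fun m => ((Equiv.Perm.sign (Fin.revPerm : Equiv.Perm (Fin m)) : ℤ) : F)
  have hs : ∀ m, s m * s m = 1 := fun m => by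
    simp only [s]
    rw [← Int.cast_mul, ← Units.val_mul, Int.units_mul_self, Units.val_one, Int.cast_one]
  have hs0 : ∀ m, s m ≠ 0 := fun m => left_ne_zero_of_mul_eq_one (hs m)
  -- `b m` is the prescribed value of `y 0 ⋯ y (m - 1)`; beyond `n / 2` its value is irrelevant.
  let b : ℕ → F := fun m => if hm : 0 < m ∧ m - 1 < n / 2 then s m * a ⟨m - 1, hm.2⟩ else 1
  have hb : ∀ m, b m ≠ 0 := fun m => by
    simp only [b]
    split_ifs
    · exact mul_ne_zero (hs0 _) (ha _)
    · exact one_ne_zero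
  refine ⟨fun ij => if ij.1.1.val + ij.1.2.val + 1 = n then
    b (ij.1.2.val + 1) / b ij.1.2.val else 0, fun k => ?_⟩
  rw [RingHom.map_det, det_antidiagonal (k.val + 1) (fun q => b (q + 1) / b q),
    prod_range_quotients b hb (by simp [b])]
  · have hbk : b (k.val + 1) = s (k.val + 1) * a k := by simp [b]
    rw [hbk, ← mul_assoc]
    exact (congrArg (· * a k) (hs _)).trans (one_mul _)
  · intro p q
    simp only [RingHom.mapMatrix_apply, Matrix.map_apply, Matrix.of_apply, eval_X]
    have := k.isLt
    exact if_congr (by omega) rfl rfl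
end

section
/- Let k ≥ 3 be an integer. In the polynomial ring ℚ[x_1, …, x_k], the polynomial ξ_k satisfies Σ_{m=2}^{k} x_{m−1} · ∂ξ_k/∂x_m = 0. (This expresses that ξ_k is a Casimir invariant of the nilpotent Lie algebra with basis e_1, …, e_n and nonzero brackets [e_m, e_n] = e_{m−1} for m = 2, …, n−1, whenever 3 ≤ k ≤ n−1.) -/
/-!
The operator `D = Σ_m x_{m-1} ∂/∂x_m` is a derivation with `D x_1 = 0` and `D x_m = x_{m-1}` for
`2 ≤ m ≤ k`. Put `c_i = (-1)^i / i!`, so that `(i + 1) c_{i+1} = -c_i`, and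
`T_j = c_{k-j} x_1^{j-2} x_2^{k-j} x_{j-1}`. By the Leibniz rule `D` sends the `j`-th summand of
`ξ_k`, `2 ≤ j < k`, to `T_j - T_{j+1}`, the summand `j = k` to `T_k` and the summand `j = 1` to
`-T_2`, so `D ξ_k` telescopes to zero.
-/

open MvPolynomial

/-- The polynomial `ξ_k = Σ_{j=1}^{k} ((−1)^{k−j}/(k−j)!) x_1^{j−2} x_2^{k−j} x_j`
(with the `j = 1` term interpreted as `((−1)^{k−1}/(k−1)!) x_2^{k−1}`), where the
variable `X m` stands for `x_{m+1}` (so `X 0 = x_1`, `X 1 = x_2`, …). -/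
noncomputable def xiPoly (F : Type*) [Field F] (k : ℕ) : MvPolynomial ℕ F :=
  C ((-1 : F) ^ (k - 1) / (Nat.factorial (k - 1) : F)) * X 1 ^ (k - 1)
    + ∑ j ∈ Finset.Icc 2 k,
        C ((-1 : F) ^ (k - j) / (Nat.factorial (k - j) : F))
          * X 0 ^ (j - 2) * X 1 ^ (k - j) * X (j - 1)

/-- The derivation `Σ_{m=2}^{k} x_{m-1} ∂/∂x_m`, with variables coded `0`-based. -/
noncomputable def shiftDer (k : ℕ) : Derivation ℚ (MvPolynomial ℕ ℚ) (MvPolynomial ℕ ℚ) :=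
  ∑ m ∈ Finset.Icc 2 k, (X (m - 2) : MvPolynomial ℕ ℚ) • pderiv (m - 1)

lemma shiftDer_apply (k : ℕ) (p : MvPolynomial ℕ ℚ) :
    shiftDer k p = ∑ m ∈ Finset.Icc 2 k, X (m - 2) * pderiv (m - 1) p := by
  have h := congrFun (map_sum (Derivation.coeFnAddMonoidHom (R := ℚ) (A := MvPolynomial ℕ ℚ)
    (M := MvPolynomial ℕ ℚ)) (fun m => (X (m - 2) : MvPolynomial ℕ ℚ) • pderiv (m - 1))
    (Finset.Icc 2 k)) p
  rw [Finset.sum_apply] at h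
  exact h

lemma shiftDer_X_zero (k : ℕ) : shiftDer k (X 0) = 0 := by
  rw [shiftDer_apply]
  refine Finset.sum_eq_zero fun m hm => ?_
  rw [Finset.mem_Icc] at hm
  rw [pderiv_X_of_ne (by omega), mul_zero]

lemma shiftDer_X_succ (k i : ℕ) (hi : i + 2 ≤ k) : shiftDer k (X (i + 1)) = X i := by
  rw [shiftDer_apply, Finset.sum_eq_single (i + 2)]
  · simp
  · intro m hm hne
    rw [Finset.mem_Icc] at hm
    rw [pderiv_X_of_ne (by omega), mul_zero]
  · intro h
    exact absurd (Finset.mem_Icc.2 ⟨by omega, hi⟩) h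

/-- The recursion `(i + 1) c_{i+1} = -c_i` for `c_i = (-1)^i / i!`, inside the polynomial ring. -/
lemma coeff_rec (i : ℕ) :
    (C ((-1 : ℚ) ^ (i + 1) / (Nat.factorial (i + 1) : ℚ)) : MvPolynomial ℕ ℚ)
        * ((i : MvPolynomial ℕ ℚ) + 1)
      = - C ((-1 : ℚ) ^ i / (Nat.factorial i : ℚ)) := by
  have h : ((i : MvPolynomial ℕ ℚ) + 1) = C ((i : ℚ) + 1) := by simp
  rw [h, ← C_mul, ← C_neg]
  congr 1
  have h1 : (Nat.factorial i : ℚ) ≠ 0 := by positivity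
  have h2 : (i : ℚ) + 1 ≠ 0 := by positivity
  rw [Nat.factorial_succ]
  push_cast
  field_simp
  ring

/-- The telescoping terms: `T_j` of the header with `k = n + 2` and `j = i + 2`, extended by zero
past the last summand. -/
noncomputable def teleTerm (n i : ℕ) : MvPolynomial ℕ ℚ :=
  if i ≤ n then
    C ((-1 : ℚ) ^ (n - i) / (Nat.factorial (n - i) : ℚ)) * X 0 ^ i * X 1 ^ (n - i) * X i
  else 0

lemma shiftDer_summand (n i : ℕ) (hi : i ≤ n) :
    shiftDer (n + 2) (C ((-1 : ℚ) ^ (n - i) / (Nat.factorial (n - i) : ℚ))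
      * X 0 ^ i * X 1 ^ (n - i) * X (i + 1)) = teleTerm n i - teleTerm n (i + 1) := by
  obtain ⟨d, rfl⟩ := Nat.exists_eq_add_of_le hi
  have h1 := shiftDer_X_succ (i + d + 2) 0 (by omega)
  rw [zero_add] at h1
  have hC (a : ℚ) : shiftDer (i + d + 2) (C a) = 0 := (shiftDer (i + d + 2)).map_algebraMap a
  simp only [Derivation.leibniz, Derivation.leibniz_pow, shiftDer_X_zero, h1, hC,
    shiftDer_X_succ (i + d + 2) i (by omega), smul_eq_mul, Nat.add_sub_cancel_left, teleTerm,
    if_pos hi, smul_zero, mul_zero, add_zero]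
  cases d with
  | zero => simp
  | succ d =>
    have e : i + (d + 1) - (i + 1) = d := by omega
    rw [if_pos (by omega), e]
    simp only [nsmul_eq_mul, Nat.add_sub_cancel, Nat.cast_add, Nat.cast_one]
    linear_combination (X 0 ^ (i + 1) * X 1 ^ d * X (i + 1)) * coeff_rec d

lemma shiftDer_first (n : ℕ) :
    shiftDer (n + 2) (C ((-1 : ℚ) ^ (n + 1) / (Nat.factorial (n + 1) : ℚ)) * X 1 ^ (n + 1))
      = - teleTerm n 0 := by
  have h1 := shiftDer_X_succ (n + 2) 0 (by omega)
  rw [zero_add] at h1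
  have hC (a : ℚ) : shiftDer (n + 2) (C a) = 0 := (shiftDer (n + 2)).map_algebraMap a
  simp only [Derivation.leibniz, Derivation.leibniz_pow, h1, hC, smul_eq_mul, nsmul_eq_mul,
    Nat.add_sub_cancel, Nat.cast_add, Nat.cast_one, teleTerm, if_pos (Nat.zero_le n), Nat.sub_zero]
  linear_combination (X 0 * X 1 ^ n) * coeff_rec n

/-- For `k ≥ 3`, in `ℚ[x_1, …, x_k]` one has
`Σ_{m=2}^{k} x_{m−1} · ∂ξ_k/∂x_m = 0` (so `ξ_k` is a Casimir invariant of the nilpotent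
Lie algebra with brackets `[e_m, e_n] = e_{m−1}`). Variables are coded `0`-based:
`x_m` is `X (m-1)`, and `∂/∂x_m` is `pderiv (m-1)`. -/
theorem xiPoly_annihilated (k : ℕ) (hk : 3 ≤ k) :
    ∑ m ∈ Finset.Icc 2 k,
      X (m - 2) * MvPolynomial.pderiv (m - 1) (xiPoly ℚ k) = 0 := by
  obtain ⟨n, rfl⟩ : ∃ n, k = n + 2 := ⟨k - 2, by omega⟩
  rw [← shiftDer_apply]
  have hxi : xiPoly ℚ (n + 2)
      = C ((-1 : ℚ) ^ (n + 1) / (Nat.factorial (n + 1) : ℚ)) * X 1 ^ (n + 1)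
        + ∑ i ∈ Finset.range (n + 1), C ((-1 : ℚ) ^ (n - i) / (Nat.factorial (n - i) : ℚ))
          * X 0 ^ i * X 1 ^ (n - i) * X (i + 1) := by
    unfold xiPoly
    rw [show n + 2 - 1 = n + 1 by omega, add_right_inj,
      ← Finset.Ico_add_one_right_eq_Icc, Finset.sum_Ico_eq_sum_range,
      show n + 2 + 1 - 2 = n + 1 by omega]
    refine Finset.sum_congr rfl fun i _ => ?_
    rw [show n + 2 - (2 + i) = n - i by omega, show 2 + i - 2 = i by omega,
      show 2 + i - 1 = i + 1 by omega]
  rw [hxi, map_add, map_sum, shiftDer_first, Finset.sum_congr rfl fun i hi =>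
    shiftDer_summand n i (Nat.lt_succ_iff.1 (Finset.mem_range.1 hi)), Finset.sum_range_sub']
  simp [teleTerm]
end

section
/- Let F be a field of characteristic zero, let n ≥ 4 and let k be an integer with 3 ≤ k ≤ n−1, and let α, β ∈ F. Then in F[x_1, …, x_k], Σ_{j=1}^{k} ((n−j−1)α + β) · x_j · ∂ξ_k/∂x_j = (k−1)((n−3)α + β) · ξ_k. In particular (α = 0, β = 1) ξ_k is homogeneous of degree k−1, and ξ_k is an eigenfunction of every weighted Euler operator with weights γ_j = (n−j−1)α + β, with eigenvalue (k−1)((n−3)α+β). -/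
/-!
The weighted Euler operator is a derivation that multiplies each variable `x_j` by its weight
`γ_j = (n - j - 1) α + β` (`weightedEuler_X`). By the Leibniz rule every monomial is therefore an
eigenvector whose eigenvalue is the sum of the weights of its factors. The monomial `x_2^{k-1}` has
eigenvalue `(k - 1) γ_2`, and so does each `x_1^{j-2} x_2^{k-j} x_j`, because the weights are affine
in `j`, which gives `(j - 2) γ_1 + (k - j) γ_2 + γ_j = (k - 1) γ_2`. Finally `γ_2 = (n - 3) α + β`.
-/

open MvPolynomial

/-- The weighted Euler derivation `Σ_{j=1}^{k} w_j x_j ∂/∂x_j`, with `x_j` coded as `X (j - 1)`. -/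
noncomputable def weightedEuler {F : Type*} [Field F] (k : ℕ) (w : ℕ → F) :
    Derivation F (MvPolynomial ℕ F) (MvPolynomial ℕ F) :=
  ∑ j ∈ Finset.Icc 1 k, (C (w j) * X (j - 1) : MvPolynomial ℕ F) • pderiv (j - 1)

theorem weightedEuler_apply {F : Type*} [Field F] (k : ℕ) (w : ℕ → F) (p : MvPolynomial ℕ F) :
    weightedEuler k w p =
      ∑ j ∈ Finset.Icc 1 k, C (w j) * X (j - 1) * pderiv (j - 1) p := by
  rw [weightedEuler, ← Derivation.coeFnAddMonoidHom_apply, map_sum, Finset.sum_apply]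
  rfl

theorem weightedEuler_X {F : Type*} [Field F] (k : ℕ) (w : ℕ → F) (j : ℕ)
    (hj : j ∈ Finset.Icc 1 k) :
    weightedEuler k w (X (j - 1)) = C (w j) * X (j - 1) := by
  rw [weightedEuler_apply, Finset.sum_eq_single_of_mem j hj]
  · simp
  · intro i hi hij
    rw [Finset.mem_Icc] at hi hj
    rw [pderiv_X_of_ne (by omega), mul_zero]

theorem derivation_pow_eigen {F : Type*} [Field F]
    (D : Derivation F (MvPolynomial ℕ F) (MvPolynomial ℕ F)) {p : MvPolynomial ℕ F} {a : F}
    (hp : D p = C a * p) (m : ℕ) : D (p ^ m) = C (m * a) * p ^ m := by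
  induction m with
  | zero => simp
  | succ m ih =>
    rw [pow_succ, Derivation.leibniz, ih, hp]
    simp only [smul_eq_mul, Nat.cast_succ, add_mul, one_mul, C_add]
    ring

/-- For a field `F` of characteristic zero, `n ≥ 4`, `3 ≤ k ≤ n − 1` and
`α, β ∈ F`, in `F[x_1, …, x_k]` one has
`Σ_{j=1}^{k} ((n−j−1)α + β) · x_j · ∂ξ_k/∂x_j = (k−1)((n−3)α + β) · ξ_k`.
Variables are coded `0`-based: `x_j` is `X (j-1)`, `∂/∂x_j` is `pderiv (j-1)`. -/
theorem xiPoly_eigenfunction_weighted_euler {F : Type*} [Field F] [CharZero F]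
    (n k : ℕ) (hn : 4 ≤ n) (hk : 3 ≤ k) (hkn : k ≤ n - 1) (α β : F) :
    ∑ j ∈ Finset.Icc 1 k,
        C (((n : F) - (j : F) - 1) * α + β) * X (j - 1)
          * MvPolynomial.pderiv (j - 1) (xiPoly F k)
      = C (((k : F) - 1) * (((n : F) - 3) * α + β)) * xiPoly F k := by
  set w : ℕ → F := fun j => ((n : F) - (j : F) - 1) * α + β with hw
  rw [← weightedEuler_apply k w]
  have hX := weightedEuler_X k w
  have h0 : weightedEuler k w (X 0) = C (w 1) * X 0 :=
    hX 1 (Finset.mem_Icc.2 ⟨le_rfl, by omega⟩)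
  have h1 : weightedEuler k w (X 1) = C (w 2) * X 1 :=
    hX 2 (Finset.mem_Icc.2 ⟨by omega, by omega⟩)
  have hC : ∀ c : F, weightedEuler k w (C c) = 0 := fun c =>
    (weightedEuler k w).map_algebraMap c
  rw [xiPoly, map_add, map_sum, mul_add, Finset.mul_sum]
  congr 1
  · rw [Derivation.leibniz, hC, derivation_pow_eigen _ h1]
    have e : ((k - 1 : ℕ) : F) * w 2 = ((k : F) - 1) * (((n : F) - 3) * α + β) := by
      rw [Nat.cast_sub (by omega)]
      simp only [hw]
      push_cast
      ring
    rw [e]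
    simp only [smul_eq_mul]
    ring
  · refine Finset.sum_congr rfl fun j hj => ?_
    rw [Finset.mem_Icc] at hj
    -- The weights are affine in the index, so all monomials of `ξ_k` have the same total weight.
    have e : ((k : F) - 1) * (((n : F) - 3) * α + β)
        = ((j - 2 : ℕ) : F) * w 1 + ((k - j : ℕ) : F) * w 2 + w j := by
      rw [Nat.cast_sub hj.1, Nat.cast_sub hj.2]
      simp only [hw]
      push_cast
      ring
    rw [e, Derivation.leibniz, Derivation.leibniz, Derivation.leibniz, hC,
      derivation_pow_eigen _ h0, derivation_pow_eigen _ h1,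
      hX j (Finset.mem_Icc.2 ⟨by omega, hj.2⟩)]
    simp only [smul_eq_mul, C_add]
    ring
end

section
/- Let n ≥ 3 and λ ∈ ℝ. On the open set {x ∈ ℝⁿ : x_1 ≠ 0}, the smooth function f(x) = x_1 · exp(−λ x_2 / x_1) satisfies Σ_{m=1}^{n−1} (λ x_m + x_{m−1}) · ∂f/∂x_m = 0, where x_0 := 0. (Thus f is an invariant of the coadjoint representation of the solvable Lie algebra with nonzero brackets [e_1, e_n] = λ e_1 and [e_m, e_n] = λ e_m + e_{m−1} for m = 2, …, n−1.) -/
/-!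
With `E = exp (-λ x₁ / x₀)` (indices from `0`), the function `f = x₀ E` has `∂₀f = E (1 + λ x₁ / x₀)`,
`∂₁f = -λ E`, and all other partial derivatives vanish. The sum therefore reduces to
`λ x₀ · E (1 + λ x₁ / x₀) - (λ x₁ + x₀) · λ E = 0`.
-/

/-- The differential of `y ↦ y i * exp (-lam * y j / y i)` on `{y i ≠ 0}`: only the `i`-th and `j`-th
components of the direction `v` enter. -/
lemma fderiv_mul_exp_div_apply {n : ℕ} (i j : Fin n) (lam : ℝ) (x : Fin n → ℝ) (hx : x i ≠ 0)
    (v : Fin n → ℝ) :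
    fderiv ℝ (fun y : Fin n → ℝ => y i * Real.exp (-lam * y j / y i)) x v =
      Real.exp (-lam * x j / x i) * ((1 + lam * x j / x i) * v i - lam * v j) := by
  have hi : HasFDerivAt (fun y : Fin n → ℝ => y i)
      (ContinuousLinearMap.proj i : (Fin n → ℝ) →L[ℝ] ℝ) x := hasFDerivAt_apply i x
  have hj : HasFDerivAt (fun y : Fin n → ℝ => y j)
      (ContinuousLinearMap.proj j : (Fin n → ℝ) →L[ℝ] ℝ) x := hasFDerivAt_apply j x
  have hinv := (hasDerivAt_inv hx).comp_hasFDerivAt x hi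
  have h := hi.mul (((hj.const_mul (-lam)).mul hinv).exp)
  have h' := h.fderiv
  simp only [Function.comp_def, Pi.mul_def, ← div_eq_mul_inv] at h'
  rw [h']
  simp
  field_simp
  ring

/-- For `n ≥ 3` and `λ ∈ ℝ`, on `{x : x_1 ≠ 0}` the function
`f(x) = x_1 · exp(−λ x_2 / x_1)` satisfies
`Σ_{m=1}^{n−1} (λ x_m + x_{m−1}) ∂f/∂x_m = 0` (with `x_0 := 0`).
Coordinates are coded `0`-based: `x_m` is the coordinate with index `m − 1`. -/
theorem invariant_of_Jordan_block_algebra (n : ℕ) (hn : 3 ≤ n) (lam : ℝ)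
    (x : Fin n → ℝ) (hx : x ⟨0, by omega⟩ ≠ 0) :
    ∑ m : Fin (n - 1),
      (lam * x ⟨m.val, by have := m.isLt; omega⟩
          + (if m.val = 0 then 0 else x ⟨m.val - 1, by have := m.isLt; omega⟩)) *
        fderiv ℝ
          (fun y : Fin n → ℝ =>
            y ⟨0, by omega⟩ * Real.exp (-lam * y ⟨1, by omega⟩ / y ⟨0, by omega⟩))
          x (Pi.single ⟨m.val, by have := m.isLt; omega⟩ 1) = 0 := by
  obtain ⟨k, rfl⟩ : ∃ k, n = k + 3 := ⟨n - 3, by omega⟩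
  simp only [fderiv_mul_exp_div_apply _ _ lam x hx]
  change ∑ m : Fin (k + 2), _ = _
  -- Only the first two summands can be nonzero, and they cancel each other.
  rw [Fin.sum_univ_succ, Fin.sum_univ_succ, Finset.sum_eq_zero]
  · have hx0 : x 0 ≠ 0 := hx
    simp [Pi.single_apply]
    field_simp
    ring
  · intro m _
    simp
end

section
/- Let n ≥ 4, let k be an integer with 3 ≤ k ≤ n−1, and let λ ∈ ℝ. On the open set {x ∈ ℝⁿ : x_1 ≠ 0}, the smooth function g(x) = ξ_k(x_1, …, x_k) / x_1^{k−1} satisfies Σ_{m=1}^{n−1} (λ x_m + x_{m−1}) · ∂g/∂x_m = 0, where x_0 := 0. (Thus g = ξ_k/ξ_1^{k−1} is an invariant of the coadjoint representation of the solvable Lie algebra with nonzero brackets [e_1, e_n] = λ e_1 and [e_m, e_n] = λ e_m + e_{m−1} for m = 2, …, n−1.) -/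
/-!
The idea: in the coordinates `u = x_2 / x_1` and `w_m = x_m / x_1` the function `ξ_k / x_1^(k-1)`
becomes `∑_{i<k} ((-1)^i / i!) u^i w_{k-i}` (`xiFun_div_eq`). The vector field sends
`w_m` to `w_{m-1}` (with `w_0 = 0`) and `u` to `1`: the `λ`-part is the Euler field, which kills
functions of degree zero. Applying it to the sum therefore gives a telescoping sum with both
boundary terms zero (`hasDerivAt_scaled`). The sum of partial derivatives in the theorem is
the derivative along the line through `x` with the vector field's value as velocity.
-/


/-- The real function `ξ_k(x_1, …, x_k) = Σ_{j=1}^{k} ((−1)^{k−j}/(k−j)!) x_1^{j−2} x_2^{k−j} x_j`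
(with the `j = 1` term interpreted as `((−1)^{k−1}/(k−1)!) x_2^{k−1}`), where the argument
`x : ℕ → ℝ` is coded `0`-based: `x 0 = x_1`, `x 1 = x_2`, …, `x (j-1) = x_j`. -/
noncomputable def xiFun (k : ℕ) (x : ℕ → ℝ) : ℝ :=
  (-1 : ℝ) ^ (k - 1) / (Nat.factorial (k - 1) : ℝ) * (x 1) ^ (k - 1)
    + ∑ j ∈ Finset.Icc 2 k,
        (-1 : ℝ) ^ (k - j) / (Nat.factorial (k - j) : ℝ)
          * (x 0) ^ (j - 2) * (x 1) ^ (k - j) * x (j - 1)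

/-- Extension of a finite tuple of coordinates by zero. -/
def extFun {n : ℕ} (x : Fin n → ℝ) : ℕ → ℝ := fun i => if h : i < n then x ⟨i, h⟩ else 0

/-- The degree-zero form of `ξ_k / x_1^(k-1)`, valid where `x_1 ≠ 0`. -/
lemma xiFun_div_eq (k : ℕ) (hk : 2 ≤ k) (y : ℕ → ℝ) (h0 : y 0 ≠ 0) :
    xiFun k y / y 0 ^ (k - 1) =
      ∑ i ∈ Finset.range k,
        (-1 : ℝ) ^ i / (Nat.factorial i : ℝ) * (y 1 / y 0) ^ i * (y (k - 1 - i) / y 0) := by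
  obtain ⟨K, rfl⟩ : ∃ K, k = K + 2 := ⟨k - 2, by omega⟩
  rw [← Finset.sum_range_reflect, Finset.sum_range_succ', xiFun, add_div, add_comm,
    Finset.sum_div, ← Finset.Ico_add_one_right_eq_Icc, Finset.sum_Ico_eq_sum_range]
  congr 1
  · refine Finset.sum_congr (by congr 1) fun j hj => ?_
    have hj' : j < K + 1 := by simpa using hj
    obtain ⟨r, rfl⟩ : ∃ r, K = j + r := ⟨K - j, by omega⟩
    rw [show j + r + 2 - (2 + j) = r by omega, show 2 + j - 2 = j by omega,
      show 2 + j - 1 = j + 1 by omega, show j + r + 2 - 1 - (j + 1) = r by omega,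
      show j + r + 2 - 1 - r = j + 1 by omega, show j + r + 2 - 1 = j + r + 1 by omega]
    rw [div_pow]
    field_simp
    ring
  · simp only [Nat.sub_zero, Nat.sub_self, div_self h0, mul_one]
    rw [div_pow, mul_div_assoc]

/-- The degree-zero form has vanishing derivative along any curve whose velocity at time `t`
is given by the vector field in the first `k` coordinates. -/
lemma hasDerivAt_scaled (k : ℕ) (hk : 2 ≤ k) (lam t : ℝ) (Y : ℕ → ℝ → ℝ)
    (h0 : Y 0 t ≠ 0)
    (hY : ∀ m < k, HasDerivAt (Y m) (lam * Y m t + if m = 0 then 0 else Y (m - 1) t) t) :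
    HasDerivAt (fun s => ∑ i ∈ Finset.range k,
        (-1 : ℝ) ^ i / (Nat.factorial i : ℝ) * (Y 1 s / Y 0 s) ^ i * (Y (k - 1 - i) s / Y 0 s))
      0 t := by
  -- `W m` is `w_m` in one-based indexing, so that `W 0 = 0` supplies the boundary term.
  set W : ℕ → ℝ := fun m => if m = 0 then 0 else Y (m - 1) t / Y 0 t with hW
  have hw : ∀ m < k, HasDerivAt (fun s => Y m s / Y 0 s) (W m) t := by
    intro m hm
    refine ((hY m hm).div (hY 0 (by omega)) h0).congr_deriv ?_
    rcases eq_or_ne m 0 with rfl | h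
    · simp only [hW, if_true]
      ring
    · simp only [hW, h, if_false, if_true]
      field_simp
      ring
  have hu : HasDerivAt (fun s => Y 1 s / Y 0 s) 1 t := by
    simpa [hW, h0] using hw 1 (by omega)
  set u := Y 1 t / Y 0 t with hu_def
  set F : ℕ → ℝ := fun i =>
    (-1 : ℝ) ^ i / (Nat.factorial i : ℝ) * (i * u ^ (i - 1)) * W (k - i) with hF
  have key : HasDerivAt (fun s => ∑ i ∈ Finset.range k,
        (-1 : ℝ) ^ i / (Nat.factorial i : ℝ) * (Y 1 s / Y 0 s) ^ i * (Y (k - 1 - i) s / Y 0 s))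
      (∑ i ∈ Finset.range k, (F i - F (i + 1))) t := by
    refine HasDerivAt.fun_sum fun i hi => ?_
    have hi' : i < k := by simpa using hi
    refine (((hu.fun_pow i).const_mul _).mul (hw (k - 1 - i) (by omega))).congr_deriv ?_
    have h1 : W (k - i) = Y (k - 1 - i) t / Y 0 t := by
      simp only [hW]
      rw [if_neg (by omega), show k - i - 1 = k - 1 - i by omega]
    have h2 : k - (i + 1) = k - 1 - i := by omega
    have hfac : ((Nat.factorial (i + 1) : ℕ) : ℝ) = (i + 1) * Nat.factorial i := by
      rw [Nat.factorial_succ]; push_cast; ring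
    have hne : (Nat.factorial i : ℝ) ≠ 0 := by positivity
    have hne' : (i : ℝ) + 1 ≠ 0 := by positivity
    simp only [hF, h1, h2, hfac, Nat.add_sub_cancel, ← hu_def]
    push_cast
    field_simp
    ring
  rw [Finset.sum_range_sub'] at key
  simpa [hF, hW] using key

/-- For `n ≥ 4`, `3 ≤ k ≤ n − 1` and `λ ∈ ℝ`, on `{x : x_1 ≠ 0}` the function
`g(x) = ξ_k(x_1, …, x_k) / x_1^{k−1}` satisfies
`Σ_{m=1}^{n−1} (λ x_m + x_{m−1}) ∂g/∂x_m = 0` (with `x_0 := 0`).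
Coordinates are coded `0`-based: `x_m` is the coordinate with index `m − 1`. -/
theorem rational_invariant_of_Jordan_block_algebra (n k : ℕ) (hn : 4 ≤ n) (hk : 3 ≤ k)
    (hkn : k ≤ n - 1) (lam : ℝ) (x : Fin n → ℝ) (hx : x ⟨0, by omega⟩ ≠ 0) :
    ∑ m : Fin (n - 1),
      (lam * x ⟨m.val, by have := m.isLt; omega⟩
          + (if m.val = 0 then 0 else x ⟨m.val - 1, by have := m.isLt; omega⟩)) *
        fderiv ℝ
          (fun y : Fin n → ℝ => xiFun k (extFun y) / (y ⟨0, by omega⟩) ^ (k - 1))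
          x (Pi.single ⟨m.val, by have := m.isLt; omega⟩ 1) = 0 := by
  classical
  -- The value of the vector field at `x`; it has no component in the last coordinate.
  set v : Fin n → ℝ := fun i => if i.val < n - 1 then
    lam * x i + (if i.val = 0 then 0 else x ⟨i.val - 1, by omega⟩) else 0 with hv
  have hsum : v = ∑ m : Fin (n - 1),
      (lam * x ⟨m.val, by have := m.isLt; omega⟩
          + (if m.val = 0 then 0 else x ⟨m.val - 1, by have := m.isLt; omega⟩)) •
        (Pi.single ⟨m.val, by have := m.isLt; omega⟩ 1 : Fin n → ℝ) := by
    ext i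
    rw [Finset.sum_apply]
    by_cases hi : i.val < n - 1
    · rw [Finset.sum_eq_single (⟨i.val, hi⟩ : Fin (n - 1))]
      · simp [hv, hi]
      · intro b _ hb
        have : i ≠ ⟨b.val, by omega⟩ := fun h => hb (by ext; simp [h])
        simp [Pi.single_eq_of_ne this]
      · simp
    · rw [Finset.sum_eq_zero]
      · simp [hv, hi]
      · intro b _
        have : i ≠ ⟨b.val, by omega⟩ := fun h => hi (by rw [h]; exact b.isLt)
        simp [Pi.single_eq_of_ne this]
  set g : (Fin n → ℝ) → ℝ :=
    fun y : Fin n → ℝ => xiFun k (extFun y) / (y ⟨0, by omega⟩) ^ (k - 1) with hg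
  have hgoal : fderiv ℝ g x v = 0 := by
    have hext : ∀ i, Differentiable ℝ (fun y : Fin n → ℝ => extFun y i) := by
      intro i
      unfold extFun
      split_ifs <;> fun_prop
    have hdiff : DifferentiableAt ℝ g x := by
      have hnum : DifferentiableAt ℝ (fun y : Fin n → ℝ => xiFun k (extFun y)) x := by
        unfold xiFun
        fun_prop
      have hden : DifferentiableAt ℝ (fun y : Fin n → ℝ => y ⟨0, by omega⟩ ^ (k - 1)) x := by
        fun_prop
      have hne : (fun y : Fin n → ℝ => y ⟨0, by omega⟩ ^ (k - 1)) x ≠ 0 := pow_ne_zero _ hx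
      simpa only [hg, div_eq_mul_inv] using hnum.fun_mul (hden.fun_inv hne)
    have hline : HasDerivAt (fun t : ℝ => x + t • v) v 0 := by
      simpa using ((hasDerivAt_id (0 : ℝ)).smul_const v).const_add x
    have hcomp : HasDerivAt (fun t : ℝ => g (x + t • v)) (fderiv ℝ g x v) 0 := by
      have hfd : HasFDerivAt g (fderiv ℝ g x) (x + (0 : ℝ) • v) := by
        simpa using hdiff.hasFDerivAt
      exact hfd.comp_hasDerivAt (0 : ℝ) hline
    have hzero : ∀ y : Fin n → ℝ, extFun y 0 = y ⟨0, by omega⟩ := fun y => by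
      simp [extFun, show 0 < n by omega]
    have hconst := hasDerivAt_scaled k (by omega) lam 0 (fun m t => extFun (x + t • v) m)
      (by simpa [hzero] using hx) (by
        intro m hm
        have hmn : m < n := by omega
        have hmn' : m < n - 1 := by omega
        have hmn'' : m - 1 < n := by omega
        have := hasDerivAt_pi.1 hline ⟨m, hmn⟩
        simpa [extFun, hmn, hmn'', hv, hmn'] using this)
    refine hcomp.unique (hconst.congr_of_eventuallyEq ?_)
    have hne : ∀ᶠ t : ℝ in nhds 0, extFun (x + t • v) 0 ≠ 0 := by
      refine ContinuousAt.eventually_ne ?_ (by simpa [hzero] using hx)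
      exact ((hext 0).continuous.comp (by fun_prop : Continuous fun t : ℝ => x + t • v)).continuousAt
    filter_upwards [hne] with t ht
    rw [← xiFun_div_eq k (by omega) _ ht, hzero]
  rw [hsum, map_sum] at hgoal
  simpa only [map_smul, smul_eq_mul] using hgoal
end

section
/- Let r ≥ 1, n = 2r + 1, and let μ, ν ∈ ℝ with ν ≠ 0. On the open set {x ∈ ℝⁿ : x_1 ≠ 0}, the smooth function f(x) = (x_1² + x_2²) · exp(−(2μ/ν) · arctan(x_2/x_1)) satisfies V f = 0, where V is the vector field V = Σ_{k=1}^{r} [ (μ x_{2k−1} − ν x_{2k} + x_{2k−3}) ∂/∂x_{2k−1} + (ν x_{2k−1} + μ x_{2k} + x_{2k−2}) ∂/∂x_{2k} ], with x_{−1} := 0 and x_0 := 0. -/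
/-!
The function depends only on the first two coordinates `a`, `b`, so only the `k = 1` summand of `V`
survives, and there `V` is the plane linear field `(μ a - ν b) ∂_a + (ν a + μ b) ∂_b`. In polar
coordinates this field scales `ρ² = a² + b²` at rate `2μ` and advances the angle `arctan (b / a)` at
rate `ν`, so the two contributions to `V (ρ² exp (-(2μ/ν) θ))` cancel. The differential of the
function is computed in `fderiv_sq_mul_exp_arctan`.
-/

/-- Application of the coadjoint vector field
`V = Σ_{k=1}^{r} [(μ x_{2k−1} − ν x_{2k} + x_{2k−3}) ∂_{x_{2k−1}}
 + (ν x_{2k−1} + μ x_{2k} + x_{2k−2}) ∂_{x_{2k}}]` (with `x_{−1} := 0`, `x_0 := 0`)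
of the real Jordan-block algebra `J_{(μ,ν)}^{n−1}` (`n = 2r+1`) to a function `f` at a
point `x`. Coordinates are coded `0`-based: `x_m` is the coordinate with index `m − 1`. -/
noncomputable def realJordanField (r : ℕ) (μ ν : ℝ)
    (f : (Fin (2 * r + 1) → ℝ) → ℝ) (x : Fin (2 * r + 1) → ℝ) : ℝ :=
  ∑ k : Fin r,
    ((μ * x ⟨2 * k.val, by have := k.isLt; omega⟩
        - ν * x ⟨2 * k.val + 1, by have := k.isLt; omega⟩
        + (if k.val = 0 then 0 else x ⟨2 * k.val - 2, by have := k.isLt; omega⟩)) *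
      fderiv ℝ f x (Pi.single ⟨2 * k.val, by have := k.isLt; omega⟩ 1)
    + (ν * x ⟨2 * k.val, by have := k.isLt; omega⟩
        + μ * x ⟨2 * k.val + 1, by have := k.isLt; omega⟩
        + (if k.val = 0 then 0 else x ⟨2 * k.val - 1, by have := k.isLt; omega⟩)) *
      fderiv ℝ f x (Pi.single ⟨2 * k.val + 1, by have := k.isLt; omega⟩ 1))

/-- The differential of `(a² + b²) exp (c arctan (b / a))`, where `a = y i` and `b = y j`. The
factor `a² + b²` cancels the denominator of `dθ = (a db - b da) / (a² + b²)`. -/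
lemma fderiv_sq_mul_exp_arctan {ι : Type*} [Fintype ι] (i j : ι) (c : ℝ) (x v : ι → ℝ)
    (hx : x i ≠ 0) :
    fderiv ℝ (fun y : ι → ℝ => (y i ^ 2 + y j ^ 2) * Real.exp (c * Real.arctan (y j / y i))) x v
      = Real.exp (c * Real.arctan (x j / x i)) *
        (2 * x i * v i + 2 * x j * v j + c * (x i * v j - x j * v i)) := by
  have hi : HasFDerivAt (fun y : ι → ℝ => y i) (ContinuousLinearMap.proj (R := ℝ) i) x :=
    hasFDerivAt_apply i x
  have hj : HasFDerivAt (fun y : ι → ℝ => y j) (ContinuousLinearMap.proj (R := ℝ) j) x :=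
    hasFDerivAt_apply j x
  have h := ((hi.pow 2).add (hj.pow 2)).mul
    (((hj.mul ((hasDerivAt_inv hx).comp_hasFDerivAt x hi)).arctan.const_mul c).exp)
  have h' : HasFDerivAt
      (fun y : ι → ℝ => (y i ^ 2 + y j ^ 2) * Real.exp (c * Real.arctan (y j / y i))) _ x := h
  have hpos : x i ^ 2 + x j ^ 2 ≠ 0 := by positivity
  rw [h'.fderiv]
  simp [← div_eq_mul_inv]
  field_simp
  ring

/-- For `r ≥ 1`, `n = 2r + 1`, `μ, ν ∈ ℝ`, `ν ≠ 0`, on `{x : x_1 ≠ 0}` the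
function `f(x) = (x_1² + x_2²) · exp(−(2μ/ν) arctan(x_2/x_1))` satisfies `V f = 0`. -/
theorem transcendental_invariant_of_realJordan (r : ℕ) (hr : 1 ≤ r) (μ ν : ℝ)
    (hν : ν ≠ 0) (x : Fin (2 * r + 1) → ℝ) (hx : x ⟨0, by omega⟩ ≠ 0) :
    realJordanField r μ ν
      (fun y : Fin (2 * r + 1) → ℝ =>
        ((y ⟨0, by omega⟩) ^ 2 + (y ⟨1, by omega⟩) ^ 2) *
          Real.exp (-(2 * μ / ν) * Real.arctan (y ⟨1, by omega⟩ / y ⟨0, by omega⟩)))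
      x = 0 := by
  have key := fun v => fderiv_sq_mul_exp_arctan (⟨0, by omega⟩ : Fin (2 * r + 1)) ⟨1, by omega⟩
    (-(2 * μ / ν)) x v hx
  unfold realJordanField
  simp only [key]
  rw [Finset.sum_eq_single (⟨0, hr⟩ : Fin r)]
  · simp
    field_simp
    ring
  · intro k _ hk
    have hk0 : k.val ≠ 0 := fun h => hk (Fin.ext h)
    have h1 : 1 ≠ 2 * k.val := by omega
    simp [Fin.ext_iff, hk0, h1]
  · simp
end

section
/- Let r ≥ 2, n = 2r + 1, and let μ, ν ∈ ℝ with ν ≠ 0. On the open set {x ∈ ℝⁿ : x_1² + x_2² ≠ 0}, the smooth function g(x) = (x_1 x_4 − x_2 x_3) / (x_1² + x_2²) satisfies V g = 0, where V is the vector field V = Σ_{k=1}^{r} [ (μ x_{2k−1} − ν x_{2k} + x_{2k−3}) ∂/∂x_{2k−1} + (ν x_{2k−1} + μ x_{2k} + x_{2k−2}) ∂/∂x_{2k} ], with x_{−1} := 0 and x_0 := 0. -/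
/-- The quotient rule for `(y_i y_l − y_j y_k) / (y_i² + y_j²)`, evaluated on a direction `v`. -/
lemma fderiv_jordanQuotient {ι : Type*} [Fintype ι] (i j k l : ι) (x v : ι → ℝ)
    (hx : x i ^ 2 + x j ^ 2 ≠ 0) :
    fderiv ℝ (fun y : ι → ℝ => (y i * y l - y j * y k) / (y i ^ 2 + y j ^ 2)) x v =
      ((v i * x l + x i * v l - v j * x k - x j * v k) * (x i ^ 2 + x j ^ 2)
        - (x i * x l - x j * x k) * (2 * x i * v i + 2 * x j * v j)) /
        (x i ^ 2 + x j ^ 2) ^ 2 := by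
  have h (m : ι) : HasFDerivAt (fun y : ι → ℝ => y m)
      (ContinuousLinearMap.proj (R := ℝ) (φ := fun _ : ι => ℝ) m) x := hasFDerivAt_apply m x
  have hN := ((h i).mul (h l)).sub ((h j).mul (h k))
  have hD := ((h i).pow 2).add ((h j).pow 2)
  have hq := hN.mul ((hasDerivAt_inv hx).comp_hasFDerivAt x hD)
  have e := congrArg (fun L => L v) hq.fderiv
  refine Eq.trans e ?_
  simp
  field_simp
  ring

/-- For `r ≥ 2`, `n = 2r + 1`, `μ, ν ∈ ℝ`, `ν ≠ 0`, on
`{x : x_1² + x_2² ≠ 0}` the function `g(x) = (x_1 x_4 − x_2 x_3)/(x_1² + x_2²)`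
satisfies `V g = 0`. -/
theorem rational_invariant_of_realJordan (r : ℕ) (hr : 2 ≤ r) (μ ν : ℝ)
    (hν : ν ≠ 0) (x : Fin (2 * r + 1) → ℝ)
    (hx : (x ⟨0, by omega⟩) ^ 2 + (x ⟨1, by omega⟩) ^ 2 ≠ 0) :
    realJordanField r μ ν
      (fun y : Fin (2 * r + 1) → ℝ =>
        (y ⟨0, by omega⟩ * y ⟨3, by omega⟩ - y ⟨1, by omega⟩ * y ⟨2, by omega⟩) /
          ((y ⟨0, by omega⟩) ^ 2 + (y ⟨1, by omega⟩) ^ 2))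
      x = 0 := by
  obtain ⟨s, rfl⟩ : ∃ s, r = s + 2 := ⟨r - 2, by omega⟩
  unfold realJordanField
  simp only [fderiv_jordanQuotient _ _ _ _ x _ hx]
  rw [Fin.sum_univ_succ, Fin.sum_univ_succ]
  -- The blocks with `k ≥ 3` involve none of the first four coordinates.
  rw [Finset.sum_eq_zero (s := Finset.univ) (fun k _ => ?_)]
  · simp
    field_simp
    ring
  · have h0 (a : ℕ) (ha : a < 2 * (s + 2) + 1) (b : ℕ) (hb : b < 2 * (s + 2) + 1) (hab : a < 4)
        (hb4 : 4 ≤ b) :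
        (Pi.single (⟨b, hb⟩ : Fin (2 * (s + 2) + 1)) (1 : ℝ) : Fin (2 * (s + 2) + 1) → ℝ)
          ⟨a, ha⟩ = 0 :=
      Pi.single_eq_of_ne (by simp only [ne_eq, Fin.mk.injEq]; omega) 1
    have hk : (k.succ.succ : Fin (s + 2)).val = k.val + 2 := rfl
    simp (disch := omega) only [h0]
    simp
end

section
/- Let r ≥ 2, n = 2r + 1, and let μ, ν ∈ ℝ with ν ≠ 0. On the open set {x ∈ ℝⁿ : x_1 ≠ 0}, the smooth function h(x) = ν · (x_1 x_3 + x_2 x_4)/(x_1² + x_2²) − arctan(x_2/x_1) satisfies V h = 0, where V is the vector field V = Σ_{k=1}^{r} [ (μ x_{2k−1} − ν x_{2k} + x_{2k−3}) ∂/∂x_{2k−1} + (ν x_{2k−1} + μ x_{2k} + x_{2k−2}) ∂/∂x_{2k} ], with x_{−1} := 0 and x_0 := 0. -/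
/-- The differential of `ν (y_a y_c + y_b y_d) / (y_a² + y_b²) - arctan (y_b / y_a)` at a point
with `x_a ≠ 0`, as a combination of the coordinate differentials. -/
lemma hasFDerivAt_mixedInvariant {ι : Type*} [Fintype ι] (ν : ℝ) (a b c d : ι) (x : ι → ℝ)
    (hx : x a ≠ 0) :
    HasFDerivAt (fun y : ι → ℝ =>
        ν * (y a * y c + y b * y d) / (y a ^ 2 + y b ^ 2) - Real.arctan (y b / y a))
      ((ν * x c / (x a ^ 2 + x b ^ 2)
          - 2 * x a * (ν * (x a * x c + x b * x d)) / (x a ^ 2 + x b ^ 2) ^ 2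
          + x b / (x a ^ 2 + x b ^ 2)) • ContinuousLinearMap.proj (R := ℝ) (φ := fun _ : ι => ℝ) a
        + (ν * x d / (x a ^ 2 + x b ^ 2)
          - 2 * x b * (ν * (x a * x c + x b * x d)) / (x a ^ 2 + x b ^ 2) ^ 2
          - x a / (x a ^ 2 + x b ^ 2)) • ContinuousLinearMap.proj (R := ℝ) (φ := fun _ : ι => ℝ) b
        + (ν * x a / (x a ^ 2 + x b ^ 2)) •
            ContinuousLinearMap.proj (R := ℝ) (φ := fun _ : ι => ℝ) c
        + (ν * x b / (x a ^ 2 + x b ^ 2)) •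
            ContinuousLinearMap.proj (R := ℝ) (φ := fun _ : ι => ℝ) d) x := by
  have hD : x a ^ 2 + x b ^ 2 ≠ 0 := by positivity
  have hp (i : ι) : HasFDerivAt (fun y : ι → ℝ => y i)
      (ContinuousLinearMap.proj (R := ℝ) (φ := fun _ : ι => ℝ) i) x := hasFDerivAt_apply i x
  have h1 := ((((hp a).mul (hp c)).add ((hp b).mul (hp d))).const_mul ν).mul
    ((hasDerivAt_inv hD).comp_hasFDerivAt x (((hp a).pow 2).add ((hp b).pow 2)))
  have h2 := ((hp b).mul ((hasDerivAt_inv hx).comp_hasFDerivAt x (hp a))).arctan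
  refine (h1.sub h2).congr_fderiv ?_
  ext v
  simp
  field_simp
  ring

/-- For `r ≥ 2`, `n = 2r + 1`, `μ, ν ∈ ℝ`, `ν ≠ 0`, on `{x : x_1 ≠ 0}` the
function `h(x) = ν (x_1 x_3 + x_2 x_4)/(x_1² + x_2²) − arctan(x_2/x_1)` satisfies
`V h = 0`. -/
theorem mixed_invariant_of_realJordan (r : ℕ) (hr : 2 ≤ r) (μ ν : ℝ)
    (hν : ν ≠ 0) (x : Fin (2 * r + 1) → ℝ) (hx : x ⟨0, by omega⟩ ≠ 0) :
    realJordanField r μ ν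
      (fun y : Fin (2 * r + 1) → ℝ =>
        ν * (y ⟨0, by omega⟩ * y ⟨2, by omega⟩ + y ⟨1, by omega⟩ * y ⟨3, by omega⟩) /
            ((y ⟨0, by omega⟩) ^ 2 + (y ⟨1, by omega⟩) ^ 2)
          - Real.arctan (y ⟨1, by omega⟩ / y ⟨0, by omega⟩))
      x = 0 := by
  obtain ⟨s, rfl⟩ : ∃ s, r = s + 2 := ⟨r - 2, by omega⟩
  unfold realJordanField
  rw [(hasFDerivAt_mixedInvariant ν _ _ _ _ x hx).fderiv, Fin.sum_univ_succ, Fin.sum_univ_succ]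
  have hD : x ⟨0, by omega⟩ ^ 2 + x ⟨1, by omega⟩ ^ 2 ≠ 0 := by positivity
  -- The blocks `k ≥ 3` involve derivatives in coordinates on which `h` does not depend.
  rw [Finset.sum_eq_zero (s := Finset.univ) (f := fun i : Fin s => _)]
  · simp [Fin.ext_iff]
    field_simp
    ring
  · intro k _
    simp [Pi.single_apply, Fin.ext_iff]
    grind
end

section
/- Let a ∈ ℝ, a ≠ 0. Consider the six vector fields on ℝ⁶ given by X₁ = 2a x₁ ∂/∂x₆, X₂ = (a x₂ − x₃) ∂/∂x₆, X₃ = (x₂ + a x₃) ∂/∂x₆, X₄ = x₁ ∂/∂x₅ + (x₂ + a x₄ − x₅) ∂/∂x₆, X₅ = −x₁ ∂/∂x₄ + (x₃ + x₄ + a x₅) ∂/∂x₆, X₆ = −2a x₁ ∂/∂x₁ + (x₃ − a x₂) ∂/∂x₂ − (x₂ + a x₃) ∂/∂x₃ + (x₅ − x₂ − a x₄) ∂/∂x₄ − (x₃ + x₄ + a x₅) ∂/∂x₅. Then on the open set {x ∈ ℝ⁶ : x₁ ≠ 0, x₂ ≠ 0}, the functions F(x) = (x₂² + x₃²)/x₁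 and G(x) = x₁ · exp(−2a · arctan(x₃/x₂)) satisfy X_i F = 0 and X_i G = 0 for all i = 1, …, 6. (Hence (e₂² + e₃²)/e₁ and e₁ exp(−2a arctan(e₃/e₂)) form a basis of generalized Casimir invariants of g₆.₃₈^a.) -/
/-!
Along `X₆` the functions `x₁` and `x₂² + x₃²` are both scaled at the rate `-2a`, so their quotient
is constant, while the angle `arctan (x₃ / x₂)` decreases at unit rate, so `exp (-2a · angle)`
grows at the rate `2a` and cancels the decay of `x₁`. The fields `X₁, …, X₅` only involve
`∂₄, ∂₅, ∂₆`, and neither function depends on `x₄, x₅, x₆`. The two lemmas `fderiv_F_apply` and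
`fderiv_G_apply` give the differentials in an arbitrary direction.
-/

/-- Coefficients of the coadjoint vector fields `X₁, …, X₆` of the algebra `g₆.₃₈^a`
(`0`-based: `x₁, …, x₆` are `x 0, …, x 5`): `coeff638 a i x j` is the coefficient of
`∂/∂x_j` in `X_{i+1}` at the point `x`. The fields are
`X₁ = 2a x₁ ∂₆`, `X₂ = (a x₂ − x₃) ∂₆`, `X₃ = (x₂ + a x₃) ∂₆`,
`X₄ = x₁ ∂₅ + (x₂ + a x₄ − x₅) ∂₆`, `X₅ = −x₁ ∂₄ + (x₃ + x₄ + a x₅) ∂₆`,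
`X₆ = −2a x₁ ∂₁ + (x₃ − a x₂) ∂₂ − (x₂ + a x₃) ∂₃ + (x₅ − x₂ − a x₄) ∂₄
      − (x₃ + x₄ + a x₅) ∂₅`. -/
def coeff638 (a : ℝ) : Fin 6 → (Fin 6 → ℝ) → Fin 6 → ℝ := fun i x =>
  ![![0, 0, 0, 0, 0, 2 * a * x 0],
    ![0, 0, 0, 0, 0, a * x 1 - x 2],
    ![0, 0, 0, 0, 0, x 1 + a * x 2],
    ![0, 0, 0, 0, x 0, x 1 + a * x 3 - x 4],
    ![0, 0, 0, -x 0, 0, x 2 + x 3 + a * x 4],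
    ![-2 * a * x 0, x 2 - a * x 1, -(x 1 + a * x 2), x 4 - x 1 - a * x 3,
      -(x 2 + x 3 + a * x 4), 0]] i

theorem fderiv_F_apply (x v : Fin 6 → ℝ) (h0 : x 0 ≠ 0) :
    fderiv ℝ (fun y : Fin 6 → ℝ => ((y 1) ^ 2 + (y 2) ^ 2) / y 0) x v =
      (2 * x 1 * v 1 + 2 * x 2 * v 2) / x 0 - (x 1 ^ 2 + x 2 ^ 2) * v 0 / x 0 ^ 2 := by
  have p (j : Fin 6) : HasFDerivAt (fun y : Fin 6 → ℝ => y j)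
      (ContinuousLinearMap.proj (R := ℝ) (φ := fun _ : Fin 6 => ℝ) j) x := hasFDerivAt_apply j x
  have h := (((p 1).pow 2).add ((p 2).pow 2)).mul ((hasDerivAt_inv h0).comp_hasFDerivAt x (p 0))
  have e : (fun y : Fin 6 → ℝ => ((y 1) ^ 2 + (y 2) ^ 2) / y 0) = _ :=
    funext fun y => div_eq_mul_inv _ _
  rw [e]
  refine (congrArg (fun L => L v) h.fderiv).trans ?_
  simp
  field_simp
  ring

theorem fderiv_G_apply (a : ℝ) (x v : Fin 6 → ℝ) (h1 : x 1 ≠ 0) :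
    fderiv ℝ (fun y : Fin 6 → ℝ => y 0 * Real.exp (-2 * a * Real.arctan (y 2 / y 1))) x v =
      Real.exp (-2 * a * Real.arctan (x 2 / x 1)) *
        (v 0 - 2 * a * x 0 * (x 1 * v 2 - x 2 * v 1) / (x 1 ^ 2 + x 2 ^ 2)) := by
  have p (j : Fin 6) : HasFDerivAt (fun y : Fin 6 → ℝ => y j)
      (ContinuousLinearMap.proj (R := ℝ) (φ := fun _ : Fin 6 => ℝ) j) x := hasFDerivAt_apply j x
  have hq := (p 2).mul ((hasDerivAt_inv h1).comp_hasFDerivAt x (p 1))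
  have h := (p 0).mul ((hq.arctan.const_mul (-2 * a)).exp)
  have e : (fun y : Fin 6 → ℝ => y 0 * Real.exp (-2 * a * Real.arctan (y 2 / y 1))) = fun y =>
      y 0 * Real.exp (-2 * a * Real.arctan (y 2 * (y 1)⁻¹)) :=
    funext fun y => by rw [div_eq_mul_inv]
  have hu : x 1 ^ 2 + x 2 ^ 2 ≠ 0 := by positivity
  rw [e]
  refine (congrArg (fun L => L v) h.fderiv).trans ?_
  simp [← div_eq_mul_inv]
  field_simp
  ring

/-- For `a ≠ 0`, on `{x : x₁ ≠ 0, x₂ ≠ 0}` the functions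
`F(x) = (x₂² + x₃²)/x₁` and `G(x) = x₁ exp(−2a arctan(x₃/x₂))` are annihilated by all six
coadjoint vector fields of `g₆.₃₈^a`; hence `(e₂² + e₃²)/e₁` and
`e₁ exp(−2a arctan(e₃/e₂))` form a basis of generalized Casimir invariants. -/
theorem casimirs_of_g638 (a : ℝ) (ha : a ≠ 0) :
    ∀ i : Fin 6, ∀ x : Fin 6 → ℝ, x 0 ≠ 0 → x 1 ≠ 0 →
      (∑ j : Fin 6, coeff638 a i x j *
          fderiv ℝ (fun y : Fin 6 → ℝ => ((y 1) ^ 2 + (y 2) ^ 2) / y 0) x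
            (Pi.single j 1) = 0) ∧
      (∑ j : Fin 6, coeff638 a i x j *
          fderiv ℝ (fun y : Fin 6 → ℝ =>
              y 0 * Real.exp (-2 * a * Real.arctan (y 2 / y 1))) x
            (Pi.single j 1) = 0) := by
  intro i x h0 h1
  have hu : x 1 ^ 2 + x 2 ^ 2 ≠ 0 := by positivity
  simp only [fderiv_F_apply x _ h0, fderiv_G_apply a x _ h1, Fin.sum_univ_six]
  fin_cases i
  -- The first five fields have no component along `∂₁, ∂₂, ∂₃`.
  iterate 5 simp [coeff638]
  constructor
  all_goals
    simp [coeff638]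
    field_simp
    ring
end

section
/- Let n ≥ 5, let k be an integer with 3 ≤ k ≤ n−1, and let α, β ∈ ℝ with (n−2)α + β ≠ 0. Set γ_j = (n−j−1)α + β for j = 1, …, n−1 and c_k = (k−1)((n−3)α + β)/((n−2)α + β). Then on the open set {x ∈ ℝ^{n+1} : x₁ > 0}, the smooth function F_k(x) = x₁^{−c_k} · ξ_k(x₁, …, x_k) (real power) satisfies both Σ_{m=2}^{n−1} x_{m−1} · ∂F_k/∂x_m = 0 and Σ_{j=1}^{n−1} γ_j x_j · ∂F_k/∂x_j + α x_n · ∂F_k/∂x_n = 0. (Hence the functions ξ₁^{−c_k} ξ_k, k = 3, …, n−1, are invariants of the coadjoint representation of the solvable Lie algebra s_{1,n+1}^{αβ}.) -/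
/-- The derivation `x₁ ↦ 0`, `x_m ↦ x_{m-1}` kills `ξ_k`; stated along a curve `w` whose
velocity at `t` is given by this vector field. -/
lemma hasDerivAt_xiFun_shift (k : ℕ) (hk : 3 ≤ k) (w : ℝ → ℕ → ℝ) (t : ℝ)
    (h0 : HasDerivAt (fun s => w s 0) 0 t)
    (h1 : ∀ i, i + 1 < k → HasDerivAt (fun s => w s (i + 1)) (w t i) t) :
    HasDerivAt (fun s => xiFun k (w s)) 0 t := by
  have hw1 := h1 0 (by omega)
  simp only [zero_add] at hw1
  -- The telescoping quantity; the guard at `j = k + 1` avoids the truncated `k - j`.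
  let T : ℕ → ℝ := fun j => if j ≤ k then
    (-1 : ℝ) ^ (k - j) / (Nat.factorial (k - j) : ℝ) * (w t 0) ^ (j - 2) * (w t 1) ^ (k - j)
      * w t (j - 2) else 0
  have hterm : ∀ j ∈ Finset.Icc 2 k, HasDerivAt (fun s =>
      (-1 : ℝ) ^ (k - j) / (Nat.factorial (k - j) : ℝ)
          * (w s 0) ^ (j - 2) * (w s 1) ^ (k - j) * w s (j - 1)) (T j - T (j + 1)) t := by
    intro j hj
    rw [Finset.mem_Icc] at hj
    obtain ⟨i, rfl⟩ : ∃ i, j = i + 2 := ⟨j - 2, by omega⟩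
    have hi := h1 i (by omega)
    have := ((((h0.pow i).const_mul
      ((-1 : ℝ) ^ (k - (i + 2)) / (Nat.factorial (k - (i + 2)) : ℝ)))).mul
      (hw1.pow (k - (i + 2)))).mul hi
    refine this.congr_deriv ?_
    simp only [T, if_pos hj.2]
    rcases Nat.lt_or_ge (i + 2) k with h | h
    · obtain ⟨r, rfl⟩ : ∃ r, k = i + 2 + 1 + r := ⟨k - (i + 3), by omega⟩
      have e1 : i + 2 + 1 + r - (i + 2) = r + 1 := by omega
      have e2 : i + 2 + 1 + r - (i + 2 + 1) = r := by omega
      have e3 : i + 2 + 1 - 2 = i + 1 := by omega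
      rw [if_pos (by omega), e1, e2, e3]
      simp only [Nat.factorial_succ, Nat.add_sub_cancel, Pi.pow_apply, Pi.mul_apply]
      have hf : (r.factorial : ℝ) ≠ 0 := by positivity
      have hr : (r : ℝ) + 1 ≠ 0 := by positivity
      push_cast
      field_simp
      ring
    · obtain rfl : k = i + 2 := by omega
      rw [if_neg (by omega)]
      simp
  have hfirst : HasDerivAt (fun s => (-1 : ℝ) ^ (k - 1) / (Nat.factorial (k - 1) : ℝ)
      * (w s 1) ^ (k - 1)) (-T 2) t := by
    refine ((hw1.pow (k - 1)).const_mul _).congr_deriv ?_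
    obtain ⟨r, rfl⟩ : ∃ r, k = r + 2 := ⟨k - 2, by omega⟩
    have e1 : r + 2 - 1 = r + 1 := by omega
    simp only [T, e1]
    rw [if_pos (by omega)]
    simp only [Nat.factorial_succ, Nat.add_sub_cancel]
    have hf : (r.factorial : ℝ) ≠ 0 := by positivity
    have hr : (r : ℝ) + 1 ≠ 0 := by positivity
    push_cast
    field_simp
    ring
  have hsum := hfirst.add (HasDerivAt.fun_sum hterm)
  refine hsum.congr_deriv ?_
  have htel : ∀ N, 2 ≤ N → ∑ j ∈ Finset.Icc 2 N, (T j - T (j + 1)) = T 2 - T (N + 1) := by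
    intro N hN
    induction N, hN using Nat.le_induction with
    | base => simp
    | succ N hN ih => rw [Finset.sum_Icc_succ_top (by omega), ih]; ring
  rw [htel k (by omega)]
  simp [T]

/-- If `x_j` is scaled with weight `g - (j - 1) a`, then `ξ_k` is homogeneous of weight
`(k - 1) (g - a)`. -/
lemma hasDerivAt_xiFun_scale (k : ℕ) (hk : 3 ≤ k) (w : ℝ → ℕ → ℝ) (t g a : ℝ)
    (h : ∀ i, i < k → HasDerivAt (fun s => w s i) ((g - i * a) * w t i) t) :
    HasDerivAt (fun s => xiFun k (w s)) (((k : ℝ) - 1) * (g - a) * xiFun k (w t)) t := by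
  have hw0 := h 0 (by omega)
  have hw1 := h 1 (by omega)
  -- `m * y ^ (m - 1) * y = m * y ^ m` also for `m = 0`.
  have hpow : ∀ (m : ℕ) (y : ℝ), (m : ℝ) * y ^ (m - 1) * y = m * y ^ m := by
    intro m y
    cases m with
    | zero => simp
    | succ m => simp [pow_succ, mul_assoc]
  have hterm : ∀ j ∈ Finset.Icc 2 k, HasDerivAt (fun s =>
      (-1 : ℝ) ^ (k - j) / (Nat.factorial (k - j) : ℝ)
          * (w s 0) ^ (j - 2) * (w s 1) ^ (k - j) * w s (j - 1))
      (((k : ℝ) - 1) * (g - a) * ((-1 : ℝ) ^ (k - j) / (Nat.factorial (k - j) : ℝ)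
          * (w t 0) ^ (j - 2) * (w t 1) ^ (k - j) * w t (j - 1))) t := by
    intro j hj
    rw [Finset.mem_Icc] at hj
    obtain ⟨i, rfl⟩ : ∃ i, j = i + 2 := ⟨j - 2, by omega⟩
    obtain ⟨r, rfl⟩ : ∃ r, k = i + 2 + r := ⟨k - (i + 2), by omega⟩
    have e1 : i + 2 + r - (i + 2) = r := by omega
    have e2 : i + 2 - 1 = i + 1 := by omega
    simp only [e1, e2, Nat.add_sub_cancel]
    have := (((hw0.pow i).const_mul ((-1 : ℝ) ^ r / (Nat.factorial r : ℝ))).mul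
      (hw1.pow r)).mul (h (i + 1) (by omega))
    refine this.congr_deriv ?_
    have p0 := hpow i (w t 0)
    have p1 := hpow r (w t 1)
    simp only [Pi.pow_apply, Pi.mul_apply]
    push_cast
    generalize (-1 : ℝ) ^ r / (Nat.factorial r : ℝ) = c
    linear_combination (c * g * (w t 1) ^ r * w t (i + 1)) * p0
      + (c * (g - a) * (w t 0) ^ i * w t (i + 1)) * p1
  have hfirst : HasDerivAt (fun s => (-1 : ℝ) ^ (k - 1) / (Nat.factorial (k - 1) : ℝ)
      * (w s 1) ^ (k - 1)) (((k : ℝ) - 1) * (g - a) *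
        ((-1 : ℝ) ^ (k - 1) / (Nat.factorial (k - 1) : ℝ) * (w t 1) ^ (k - 1))) t := by
    refine ((hw1.pow (k - 1)).const_mul _).congr_deriv ?_
    have p1 := hpow (k - 1) (w t 1)
    have hc : ((k - 1 : ℕ) : ℝ) = (k : ℝ) - 1 := by push_cast [show 1 ≤ k by omega]; ring
    rw [hc] at p1
    rw [hc]
    push_cast
    generalize (-1 : ℝ) ^ (k - 1) / (Nat.factorial (k - 1) : ℝ) = c
    linear_combination (c * (g - a)) * p1
  have hsum := hfirst.add (HasDerivAt.fun_sum hterm)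
  refine hsum.congr_deriv ?_
  rw [← Finset.mul_sum, ← mul_add]
  rfl

lemma differentiable_extFun {n : ℕ} (i : ℕ) :
    Differentiable ℝ (fun y : Fin n → ℝ => extFun y i) := by
  unfold extFun
  by_cases h : i < n
  · simp only [h, dif_pos]; fun_prop
  · simp only [h, dif_neg, not_false_eq_true]; fun_prop

lemma differentiable_xiFun_extFun {n : ℕ} (k : ℕ) :
    Differentiable ℝ (fun y : Fin n → ℝ => xiFun k (extFun y)) := by
  have h := @differentiable_extFun n
  unfold xiFun
  fun_prop

/-- The derivative of `F` along `v` from the derivative of `ξ_k` along the line `x + s v`. -/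
lemma fderiv_apply_eq {n : ℕ} (k : ℕ) (p : ℝ) (i₀ : Fin n) (x v : Fin n → ℝ) (hx : 0 < x i₀)
    (d : ℝ) (hd : HasDerivAt (fun s : ℝ => xiFun k (extFun (x + s • v))) d 0) :
    fderiv ℝ (fun y : Fin n → ℝ => y i₀ ^ p * xiFun k (extFun y)) x v =
      v i₀ * p * x i₀ ^ (p - 1) * xiFun k (extFun x) + x i₀ ^ p * d := by
  have hdiff : DifferentiableAt ℝ (fun y : Fin n → ℝ => y i₀ ^ p * xiFun k (extFun y)) x := by
    refine DifferentiableAt.mul ?_ (differentiable_xiFun_extFun k x)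
    exact DifferentiableAt.rpow_const (by fun_prop) (Or.inl hx.ne')
  have hline : HasDerivAt (fun s : ℝ => (x + s • v) i₀) (v i₀) 0 := by
    simpa using ((hasDerivAt_id (0 : ℝ)).mul_const (v i₀)).const_add (x i₀)
  have h1 := (hline.rpow_const (p := p) (Or.inl (by simpa using hx.ne'))).mul hd
  have h2 := hdiff.hasFDerivAt.hasLineDerivAt v
  have h3 := HasDerivAt.unique h2 h1
  simpa using h3

lemma hasDerivAt_extFun_line {n : ℕ} (x v : Fin n → ℝ) (i : ℕ) (hi : i < n) :
    HasDerivAt (fun s : ℝ => extFun (x + s • v) i) (v ⟨i, hi⟩) 0 := by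
  simpa [extFun, hi] using
    ((hasDerivAt_id (0 : ℝ)).mul_const (v ⟨i, hi⟩)).const_add (x ⟨i, hi⟩)

/-- Let `n ≥ 5`, `3 ≤ k ≤ n−1`, `α, β ∈ ℝ` with `(n−2)α + β ≠ 0`. Set
`γ_j = (n−j−1)α + β` and `c_k = (k−1)((n−3)α + β)/((n−2)α + β)`. On
`{x ∈ ℝ^{n+1} : x₁ > 0}` the function `F_k(x) = x₁^{−c_k} · ξ_k(x₁, …, x_k)` satisfies
both `Σ_{m=2}^{n−1} x_{m−1} ∂F_k/∂x_m = 0` and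
`Σ_{j=1}^{n−1} γ_j x_j ∂F_k/∂x_j + α x_n ∂F_k/∂x_n = 0`.
Coordinates of `ℝ^{n+1}` are coded `0`-based: `x_m` has index `m − 1`. -/
theorem invariants_of_s1 (n k : ℕ) (hn : 5 ≤ n) (hk : 3 ≤ k) (hkn : k ≤ n - 1)
    (α β : ℝ) (hαβ : ((n : ℝ) - 2) * α + β ≠ 0)
    (x : Fin (n + 1) → ℝ) (hx : 0 < x ⟨0, by omega⟩) :
    (∑ m : Fin (n - 2),
        x ⟨m.val, by have := m.isLt; omega⟩ *
          fderiv ℝ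
            (fun y : Fin (n + 1) → ℝ =>
              (y ⟨0, by omega⟩) ^
                  (-(((k : ℝ) - 1) * (((n : ℝ) - 3) * α + β) / (((n : ℝ) - 2) * α + β))) *
                xiFun k (extFun y))
            x (Pi.single ⟨m.val + 1, by have := m.isLt; omega⟩ 1) = 0) ∧
    ((∑ j : Fin (n - 1),
        ((((n : ℝ) - ((j : ℕ) + 1) - 1) * α + β) * x ⟨j.val, by have := j.isLt; omega⟩ *
          fderiv ℝ
            (fun y : Fin (n + 1) → ℝ =>
              (y ⟨0, by omega⟩) ^
                  (-(((k : ℝ) - 1) * (((n : ℝ) - 3) * α + β) / (((n : ℝ) - 2) * α + β))) *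
                xiFun k (extFun y))
            x (Pi.single ⟨j.val, by have := j.isLt; omega⟩ 1)))
      + α * x ⟨n - 1, by omega⟩ *
          fderiv ℝ
            (fun y : Fin (n + 1) → ℝ =>
              (y ⟨0, by omega⟩) ^
                  (-(((k : ℝ) - 1) * (((n : ℝ) - 3) * α + β) / (((n : ℝ) - 2) * α + β))) *
                xiFun k (extFun y))
            x (Pi.single ⟨n - 1, by omega⟩ 1) = 0) := by
  constructor
  · let v : Fin (n + 1) → ℝ := ∑ m : Fin (n - 2),
      x ⟨m.val, by have := m.isLt; omega⟩ •
        (Pi.single (⟨m.val + 1, by have := m.isLt; omega⟩ : Fin (n + 1)) (1 : ℝ))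
    have hv0 : v ⟨0, by omega⟩ = 0 := by
      simp [v, Finset.sum_apply]
    have hv : ∀ i (hi : i + 1 < k), v ⟨i + 1, by omega⟩ = x ⟨i, by omega⟩ := by
      intro i hi
      simp only [v, Finset.sum_apply, Pi.smul_apply, Pi.single_apply, smul_eq_mul]
      rw [Finset.sum_eq_single (⟨i, by omega⟩ : Fin (n - 2))]
      · simp
      · intro b _ hb
        rw [if_neg, mul_zero]
        intro h
        apply hb
        ext
        simpa using (congrArg Fin.val h).symm
      · simp
    have hd : HasDerivAt (fun s : ℝ => xiFun k (extFun (x + s • v))) 0 0 := by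
      refine hasDerivAt_xiFun_shift k hk (fun s => extFun (x + s • v)) 0 ?_ ?_
      · simpa only [hv0] using hasDerivAt_extFun_line x v 0 (by omega)
      · intro i hi
        refine (hasDerivAt_extFun_line x v (i + 1) (by omega)).congr_deriv ?_
        rw [hv i hi]
        simp [extFun, show i < n + 1 by omega]
    have key := fderiv_apply_eq k
      (-(((k : ℝ) - 1) * (((n : ℝ) - 3) * α + β) / (((n : ℝ) - 2) * α + β))) _ x v hx 0 hd
    rw [hv0] at key
    simp only [zero_mul, mul_zero, add_zero] at key
    simpa only [v, map_sum, map_smul, smul_eq_mul] using key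
  · let v : Fin (n + 1) → ℝ := (∑ j : Fin (n - 1),
      ((((n : ℝ) - ((j : ℕ) + 1) - 1) * α + β) * x ⟨j.val, by have := j.isLt; omega⟩) •
        (Pi.single (⟨j.val, by have := j.isLt; omega⟩ : Fin (n + 1)) (1 : ℝ)))
      + (α * x ⟨n - 1, by omega⟩) • (Pi.single (⟨n - 1, by omega⟩ : Fin (n + 1)) (1 : ℝ))
    have hv : ∀ i (hi : i < k), v ⟨i, by omega⟩ =
        ((((n : ℝ) - 2) * α + β) - i * α) * x ⟨i, by omega⟩ := by
      intro i hi
      simp only [v, Finset.sum_apply, Pi.add_apply, Pi.smul_apply, Pi.single_apply, smul_eq_mul]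
      rw [Finset.sum_eq_single (⟨i, by omega⟩ : Fin (n - 1)), if_pos rfl, if_neg]
      · ring
      · intro h
        have := congrArg Fin.val h
        simp only at this
        omega
      · intro b _ hb
        rw [if_neg, mul_zero]
        intro h
        apply hb
        ext
        simpa using (congrArg Fin.val h).symm
      · simp
    have hd : HasDerivAt (fun s : ℝ => xiFun k (extFun (x + s • v)))
        (((k : ℝ) - 1) * ((((n : ℝ) - 2) * α + β) - α) * xiFun k (extFun x)) 0 := by
      have := hasDerivAt_xiFun_scale k hk (fun s => extFun (x + s • v)) 0
        (((n : ℝ) - 2) * α + β) α ?_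
      · simpa using this
      · intro i hi
        refine (hasDerivAt_extFun_line x v i (by omega)).congr_deriv ?_
        rw [hv i hi]
        simp [extFun, show i < n + 1 by omega]
    have key := fderiv_apply_eq k
      (-(((k : ℝ) - 1) * (((n : ℝ) - 3) * α + β) / (((n : ℝ) - 2) * α + β))) _ x v hx _ hd
    rw [hv 0 (by omega), Real.rpow_sub_one hx.ne'] at key
    have hz : ∀ (P X X0 : ℝ), X0 ≠ 0 →
        ((((n : ℝ) - 2) * α + β) - (0 : ℕ) * α) * X0 *
          (-(((k : ℝ) - 1) * (((n : ℝ) - 3) * α + β) / (((n : ℝ) - 2) * α + β))) * (P / X0) * X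
          + P * (((k : ℝ) - 1) * ((((n : ℝ) - 2) * α + β) - α) * X) = 0 := by
      intro P X X0 hX0
      generalize hg : ((n : ℝ) - 2) * α + β = g at *
      have : ((n : ℝ) - 3) * α + β = g - α := by rw [← hg]; ring
      rw [this]
      push_cast
      field_simp
      ring
    rw [hz _ _ _ hx.ne'] at key
    simpa only [v, map_add, map_sum, map_smul, smul_eq_mul] using key
end
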